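/- arXiv:2110.00769 — 2 statements merged into one kernel-verified Lean document; each statement's English description precedes it below -/
import Mathlib

section
/- Let q be a prime power and n ≥ 2 an integer with (n−1) dividing q²−1, and let k be an integer with 1 ≤ k ≤ ⌊(n+q−1)/(q+1)⌋. Then there exists an MDS Hermitian self-orthogonal [n,k]_{q²} code. Explicitly, writing {α_1,…,α_n} = {α ∈ 𝔽_{q²} : α^n = α} (a set of exactly n elements since (n−1) | q²−1), the value n·α_i^{n−1} − 1 lies in 𝔽_q^* for every i, and for any choice of v_i ∈ 𝔽_{q²}^* with v_i^{q+1}·(n·α_i^{n−1} − 1) = 1, the code {(v_1 f(α_1), …, v_n f(α_n)) : f ∈ 𝔽_{q²}[x], deg f ≤ k−1} is an MDS Hermitian self-orthogonal [n,k]_{q²} code. -/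
/-!
For any `n` distinct nodes `αᵢ` with nodal polynomial `h = ∏ (X - αᵢ)`, comparing the coefficients
of `X ^ (n - 1)` in the Lagrange interpolation formula gives Euler's identity
`∑ P(αᵢ) / h'(αᵢ) = 0` whenever `deg P < n - 1`. If `vᵢ ^ (q + 1) = 1 / h'(αᵢ)`, the Hermitian
product of the codewords of `f` and `g` is this sum for `P = f g ^ q`, so the code is
self-orthogonal once `(k - 1)(q + 1) < n - 1`.

For the nodes `αᵢ ^ n = αᵢ` one has `h = X ^ n - X`. The values `h'(αᵢ) = n αᵢ ^ (n - 1) - 1` are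
nonzero because the roots are simple, and they lie in the prime field because `αᵢ ^ (n - 1)` is `0`
or `1`; hence they are norms from `𝔽_{q²}` to `𝔽_q`, and the multipliers `vᵢ` exist.
-/

open scoped BigOperators

/-- A linear code `C ⊆ 𝔽_{q²}ⁿ` is Hermitian self-orthogonal if
`⟨c,c'⟩_H = ∑ i, c i * (c' i)^q = 0` for all codewords `c, c'`. -/
def IsHermSelfOrth (q : ℕ) {F : Type*} [Field F] {n : ℕ}
    (C : Submodule F (Fin n → F)) : Prop :=
  ∀ c ∈ C, ∀ c' ∈ C, ∑ i, c i * (c' i) ^ q = 0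

/-- The minimum Hamming distance of the code `C` equals `d`. -/
def MinDistEq {F : Type*} [Field F] {n : ℕ}
    (C : Submodule F (Fin n → F)) (d : ℕ) : Prop :=
  (∀ c ∈ C, c ≠ 0 → d ≤ Set.ncard {i | c i ≠ 0}) ∧
  (∃ c ∈ C, c ≠ 0 ∧ Set.ncard {i | c i ≠ 0} = d)

/-- The generalized Reed–Solomon evaluation code
`{(v₁ f(α₁), …, vₙ f(αₙ)) : f ∈ F[x], deg f ≤ k − 1}` (polynomials of degree `< k`). -/
noncomputable def evalCode {F : Type*} [Field F] {n : ℕ} (k : ℕ)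
    (α v : Fin n → F) : Submodule F (Fin n → F) :=
  Submodule.map
    (show Polynomial F →ₗ[F] (Fin n → F) from
      { toFun := fun f : Polynomial F => fun i => v i * Polynomial.eval (α i) f
        map_add' := fun f g => by funext i; simp [mul_add]
        map_smul' := fun c f => by
          funext i; simp [Polynomial.eval_smul, smul_eq_mul]; ring })
    (Polynomial.degreeLT F k)

open Polynomial

section Nodal

variable {R ι : Type*} [CommRing R] [IsDomain R]

lemma nodal_eq_of_monic {s : Finset ι} {x : ι → R} (hx : Set.InjOn x s) {f : R[X]} (hf : f.Monic)
    (hdeg : f.natDegree = s.card) (hroot : ∀ i ∈ s, f.eval (x i) = 0) :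
    Lagrange.nodal s x = f := by
  have hdegree : (Lagrange.nodal s x).degree = f.degree := by
    rw [Lagrange.degree_nodal, degree_eq_natDegree hf.ne_zero, hdeg]
  refine eq_of_degree_le_of_eval_index_eq s hx Lagrange.degree_nodal.le hdegree ?_ fun i hi => ?_
  · rw [Lagrange.nodal_monic.leadingCoeff, hf.leadingCoeff]
  · rw [Lagrange.eval_nodal_at_node hi, hroot i hi]

lemma eval_nodal_node_eq_zero_iff {s : Finset ι} {x : ι → R} (hx : Function.Injective x) {i : ι} :
    (Lagrange.nodal s x).eval (x i) = 0 ↔ i ∈ s := by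
  simp only [Lagrange.eval_nodal, Finset.prod_eq_zero_iff, sub_eq_zero, hx.eq_iff, exists_eq_right']

lemma ncard_eval_node_eq_zero_lt [Finite ι] {x : ι → R} (hx : Function.Injective x) {f : R[X]}
    (hf : f ≠ 0) {k : ℕ} (hdeg : f.degree < k) : {i | f.eval (x i) = 0}.ncard < k := by
  classical
  have := Fintype.ofFinite ι
  rw [Set.ncard_eq_toFinset_card']
  by_contra! hle
  refine hf (eq_zero_of_degree_lt_of_eval_index_eq_zero _ hx.injOn
    (hdeg.trans_le (Nat.cast_le.2 hle)) fun i hi => ?_)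
  simpa using hi

lemma nodal_eq_X_pow_sub_X {n : ℕ} (hn : 1 < n) {α : Fin n → R} (hα : Function.Injective α)
    (hroot : ∀ i, α i ^ n = α i) : Lagrange.nodal Finset.univ α = X ^ n - X := by
  have hlt : (X : R[X]).degree < n := by
    rw [degree_X]
    exact_mod_cast hn
  have hdeg : (X ^ n - X : R[X]).natDegree = n := by
    rw [natDegree_sub_eq_left_of_natDegree_lt] <;> simp [hn]
  exact nodal_eq_of_monic hα.injOn (monic_X_pow_sub hlt) (by simp [hdeg]) fun i _ => by
    simp [hroot i]

lemma eval_derivative_nodal_of_pow_eq {n : ℕ} (hn : 1 < n) {α : Fin n → R}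
    (hα : Function.Injective α) (hroot : ∀ i, α i ^ n = α i) (i : Fin n) :
    (derivative (Lagrange.nodal Finset.univ α)).eval (α i) = n * α i ^ (n - 1) - 1 := by
  simp [nodal_eq_X_pow_sub_X hn hα hroot, derivative_X_pow]

end Nodal

section Interpolation

variable {F ι : Type*} [Field F] {s : Finset ι} {x : ι → F}

lemma eval_derivative_nodal_ne_zero (hx : Set.InjOn x s) {i : ι} (hi : i ∈ s) :
    (derivative (Lagrange.nodal s x)).eval (x i) ≠ 0 := by
  classical
  have hweight := Lagrange.nodalWeight_ne_zero hx hi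
  rwa [Lagrange.nodalWeight_eq_eval_derivative_nodal hi, ne_eq, inv_eq_zero] at hweight

lemma sum_eval_div_derivative_nodal_eq_zero (hx : Set.InjOn x s) {P : F[X]}
    (hP : P.degree < (s.card - 1 : ℕ)) :
    ∑ i ∈ s, P.eval (x i) / (derivative (Lagrange.nodal s x)).eval (x i) = 0 := by
  classical
  calc ∑ i ∈ s, P.eval (x i) / (derivative (Lagrange.nodal s x)).eval (x i)
    _ = ∑ i ∈ s, P.eval (x i) / ∏ j ∈ s.erase i, (x i - x j) :=
      Finset.sum_congr rfl fun i hi => by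
        rw [Lagrange.eval_nodal_derivative_eval_node_eq hi, Lagrange.eval_nodal]
    _ = P.coeff (s.card - 1) :=
      (Lagrange.coeff_eq_sum hx (hP.trans_le (Nat.cast_le.2 (Nat.sub_le _ _)))).symm
    _ = 0 := coeff_eq_zero_of_degree_lt hP

lemma mul_pow_sub_one_ne_zero_of_pow_eq {n : ℕ} (hn : 1 < n) {α : Fin n → F}
    (hα : Function.Injective α) (hroot : ∀ i, α i ^ n = α i) (i : Fin n) :
    (n : F) * α i ^ (n - 1) - 1 ≠ 0 := by
  rw [← eval_derivative_nodal_of_pow_eq hn hα hroot]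
  exact eval_derivative_nodal_ne_zero hα.injOn (Finset.mem_univ i)

end Interpolation

section EvalCode

variable {F : Type*} [Field F] {n k : ℕ} {α v : Fin n → F}

lemma mem_evalCode {c : Fin n → F} :
    c ∈ evalCode k α v ↔ ∃ f : F[X], f.degree < k ∧ (fun i => v i * f.eval (α i)) = c := by
  simp only [← mem_degreeLT]
  rfl

lemma finrank_evalCode (hkn : k ≤ n) (hα : Function.Injective α) (hv : ∀ i, v i ≠ 0) :
    Module.finrank F (evalCode k α v) = k := by
  rw [evalCode, ← LinearMap.range_domRestrict, LinearMap.finrank_range_of_inj,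
    (degreeLTEquiv F k).finrank_eq, Module.finrank_fin_fun]
  rw [injective_iff_map_eq_zero]
  rintro ⟨f, hf⟩ hf0
  have heval (i : Fin n) : f.eval (α i) = 0 :=
    (mul_eq_zero.1 (congrFun hf0 i)).resolve_left (hv i)
  have hdeg : f.degree < (Finset.univ : Finset (Fin n)).card := by
    rw [Finset.card_fin]
    exact (mem_degreeLT.1 hf).trans_le (Nat.cast_le.2 hkn)
  exact Subtype.ext
    (eq_zero_of_degree_lt_of_eval_index_eq_zero _ hα.injOn hdeg fun i _ => heval i)

lemma ncard_support_add_ncard_eval_eq_zero (hv : ∀ i, v i ≠ 0) (f : F[X]) :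
    {i | v i * f.eval (α i) ≠ 0}.ncard + {i | f.eval (α i) = 0}.ncard = n := by
  have hcompl : {i | v i * f.eval (α i) ≠ 0} = {i | f.eval (α i) = 0}ᶜ := by
    ext i
    simp [hv i]
  rw [hcompl, add_comm, Set.ncard_add_ncard_compl, Nat.card_fin]

lemma le_ncard_support_of_mem_evalCode (hkn : k ≤ n) (hα : Function.Injective α)
    (hv : ∀ i, v i ≠ 0) {c : Fin n → F} (hc : c ∈ evalCode k α v) (hc0 : c ≠ 0) :
    n - k + 1 ≤ {i | c i ≠ 0}.ncard := by
  obtain ⟨f, hdeg, rfl⟩ := mem_evalCode.1 hc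
  change n - k + 1 ≤ {i | v i * f.eval (α i) ≠ 0}.ncard
  have hf : f ≠ 0 := by
    rintro rfl
    exact hc0 (funext fun i => by simp)
  have hzeros := ncard_eval_node_eq_zero_lt hα hf hdeg
  have hweight := ncard_support_add_ncard_eval_eq_zero (α := α) hv f
  omega

lemma exists_mem_evalCode_ncard_support_eq (hk : 1 ≤ k) (hkn : k ≤ n)
    (hα : Function.Injective α) (hv : ∀ i, v i ≠ 0) :
    ∃ c ∈ evalCode k α v, {i | c i ≠ 0}.ncard = n - k + 1 := by
  obtain ⟨s, -, hs⟩ := Finset.exists_subset_card_eq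
    (show k - 1 ≤ (Finset.univ : Finset (Fin n)).card by rw [Finset.card_fin]; omega)
  have hdeg : (Lagrange.nodal s α).degree < k := by
    rw [Lagrange.degree_nodal, hs, Nat.cast_lt]
    omega
  have hzeros : {i | (Lagrange.nodal s α).eval (α i) = 0}.ncard = k - 1 := by
    simp only [eval_nodal_node_eq_zero_iff hα, Finset.setOfPred_mem, Set.ncard_coe_finset, hs]
  refine ⟨_, mem_evalCode.2 ⟨_, hdeg, rfl⟩, ?_⟩
  have hweight := ncard_support_add_ncard_eval_eq_zero (α := α) hv (Lagrange.nodal s α)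
  omega

lemma minDistEq_evalCode (hk : 1 ≤ k) (hkn : k ≤ n) (hα : Function.Injective α)
    (hv : ∀ i, v i ≠ 0) : MinDistEq (evalCode k α v) (n - k + 1) := by
  refine ⟨fun c hc hc0 => le_ncard_support_of_mem_evalCode hkn hα hv hc hc0, ?_⟩
  obtain ⟨c, hc, hweight⟩ := exists_mem_evalCode_ncard_support_eq hk hkn hα hv
  refine ⟨c, hc, ?_, hweight⟩
  rintro rfl
  simp at hweight

lemma degree_mul_pow_le {R : Type*} [Semiring R] {f g : R[X]} (hf : f.degree < k)
    (hg : g.degree < k) (q : ℕ) : (f * g ^ q).degree ≤ ((k - 1) * (q + 1) : ℕ) := by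
  have natDegree_le {p : R[X]} (hp : p.degree < k) : p.natDegree ≤ k - 1 :=
    natDegree_le_iff_degree_le.2 <| degree_le_of_natDegree_le <| by
      rcases eq_or_ne p 0 with rfl | hp0
      · simp
      · exact Nat.le_sub_one_of_lt ((natDegree_lt_iff_degree_lt hp0).2 hp)
  refine degree_le_of_natDegree_le ?_
  calc (f * g ^ q).natDegree
    _ ≤ (k - 1) + q * (k - 1) :=
      natDegree_mul_le_of_le (natDegree_le hf) (natDegree_pow_le_of_le q (natDegree_le hg))
    _ = (k - 1) * (q + 1) := by ring

lemma isHermSelfOrth_evalCode {q : ℕ} (hk : (k - 1) * (q + 1) < n - 1)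
    (hα : Function.Injective α)
    (hv : ∀ i, v i ^ (q + 1) * (derivative (Lagrange.nodal Finset.univ α)).eval (α i) = 1) :
    IsHermSelfOrth q (evalCode k α v) := by
  intro c hc c' hc'
  obtain ⟨f, hf, rfl⟩ := mem_evalCode.1 hc
  obtain ⟨g, hg, rfl⟩ := mem_evalCode.1 hc'
  have hdeg : (f * g ^ q).degree < ((Finset.univ : Finset (Fin n)).card - 1 : ℕ) := by
    rw [Finset.card_fin]
    exact (degree_mul_pow_le hf hg q).trans_lt (Nat.cast_lt.2 hk)
  rw [← sum_eval_div_derivative_nodal_eq_zero hα.injOn hdeg]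
  refine Finset.sum_congr rfl fun i _ => ?_
  rw [eq_div_iff (right_ne_zero_of_mul_eq_one (hv i)), eval_mul, eval_pow]
  linear_combination f.eval (α i) * g.eval (α i) ^ q * hv i

theorem evalCode_mds_isHermSelfOrth {q : ℕ} (hk1 : 1 ≤ k) (hk : (k - 1) * (q + 1) < n - 1)
    (hα : Function.Injective α)
    (hv : ∀ i, v i ^ (q + 1) * (derivative (Lagrange.nodal Finset.univ α)).eval (α i) = 1) :
    Module.finrank F (evalCode k α v) = k ∧ IsHermSelfOrth q (evalCode k α v) ∧
      MinDistEq (evalCode k α v) (n - k + 1) := by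
  have hkn : k ≤ n := by
    have := Nat.le_mul_of_pos_right (k - 1) (Nat.add_one_pos q)
    omega
  have hv0 (i : Fin n) : v i ≠ 0 := fun h => by simpa [h] using hv i
  exact ⟨finrank_evalCode hkn hα hv0, isHermSelfOrth_evalCode hk hα hv,
    minDistEq_evalCode hk1 hkn hα hv0⟩

end EvalCode

lemma exists_injective_range_eq_of_ncard_eq {T : Type*} {s : Set T} (hs : s.Finite) {n : ℕ}
    (hn : s.ncard = n) : ∃ f : Fin n → T, Function.Injective f ∧ Set.range f = s := by
  obtain ⟨m, f, hf, rfl⟩ := hs.fin_param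
  obtain rfl : m = n := by
    rw [← hn, ← Set.image_univ, Set.ncard_image_of_injective _ hf, Set.ncard_univ, Nat.card_fin]
  exact ⟨f, hf, rfl⟩

section FiniteField

lemma range_powMonoidHom_eq_ker {G : Type*} [CommGroup G] [IsCyclic G] [Finite G] {a b : ℕ}
    (h : Nat.card G = a * b) :
    (powMonoidHom b : G →* G).range = (powMonoidHom a : G →* G).ker := by
  have hpos : 0 < a * b := h ▸ Nat.card_pos
  refine Subgroup.eq_of_le_of_card_ge ?_ ?_
  · rintro _ ⟨x, rfl⟩
    simp [MonoidHom.mem_ker, ← pow_mul, mul_comm b a, ← h]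
  · rw [IsCyclic.card_powMonoidHom_range, IsCyclic.card_powMonoidHom_ker, h,
      Nat.gcd_mul_right_left, Nat.gcd_mul_left_left,
      Nat.mul_div_cancel _ (Nat.pos_of_mul_pos_left hpos)]

variable {F : Type*} [Field F] [Fintype F]

/-- Surjectivity of the norm `𝔽_{q²}ˣ → 𝔽_qˣ`, where `𝔽_qˣ` is encoded by `c ^ q = c`. -/
lemma exists_pow_succ_mul_eq_one {q : ℕ} (hF : Fintype.card F = q ^ 2) {c : F} (hc0 : c ≠ 0)
    (hc : c ^ q = c) : ∃ v : F, v ^ (q + 1) * c = 1 := by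
  classical
  have hcard : Nat.card Fˣ = (q - 1) * (q + 1) := by
    rw [Nat.card_eq_fintype_card, Fintype.card_units, hF, mul_comm]
    simpa using Nat.sq_sub_sq q 1
  have hq : q ≠ 0 := by
    rintro rfl
    simp at hF
  have hker : Units.mk0 c hc0 ∈ (powMonoidHom (q - 1) : Fˣ →* Fˣ).ker := by
    rw [MonoidHom.mem_ker, powMonoidHom_apply, Units.ext_iff]
    simpa using mul_right_cancel₀ hc0 ((pow_sub_one_mul hq c).trans (hc.trans (one_mul c).symm))
  rw [← range_powMonoidHom_eq_ker hcard] at hker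
  obtain ⟨u, hu⟩ := hker
  refine ⟨(u⁻¹ : Fˣ), ?_⟩
  rw [← Units.val_mk0 hc0, ← hu]
  simp

lemma ncard_pow_succ_eq_self {m : ℕ} (hm : m ∣ Fintype.card F - 1) :
    {x : F | x ^ (m + 1) = x}.ncard = m + 1 := by
  classical
  have hset : {x : F | x ^ (m + 1) = x} =
      insert 0 (Units.val '' ((powMonoidHom m : Fˣ →* Fˣ).ker : Set Fˣ)) := by
    ext x
    rcases eq_or_ne x 0 with rfl | hx
    · simp
    · lift x to Fˣ using hx.isUnit
      rw [Set.mem_insert_iff, or_iff_right hx, Units.val_injective.mem_set_image]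
      simp [pow_succ, MonoidHom.mem_ker, Units.ext_iff]
  rw [hset, Set.ncard_insert_of_notMem (by simp),
    Set.ncard_image_of_injective _ Units.val_injective, ← Nat.card_coe_set_eq, SetLike.coe_sort_coe,
    IsCyclic.card_powMonoidHom_ker, Nat.card_eq_fintype_card, Fintype.card_units,
    Nat.gcd_eq_right hm]

lemma intCast_pow_of_dvd_card {q : ℕ} (hq : q ∣ Fintype.card F) (z : ℤ) : (z : F) ^ q = z := by
  obtain ⟨p, _, m, hp, hcard⟩ := FiniteField.card' F
  have := Fact.mk hp
  obtain ⟨r, -, rfl⟩ := (Nat.dvd_prime_pow hp).1 (hcard ▸ hq)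
  rw [← iterateFrobenius_def, map_intCast]

lemma mul_pow_sub_one_pow_of_pow_eq {q : ℕ} (hq : q ∣ Fintype.card F) {n : ℕ} (hn : n ≠ 0) {a : F}
    (ha : a ^ n = a) :
    ((n : F) * a ^ (n - 1) - 1) ^ q = (n : F) * a ^ (n - 1) - 1 := by
  have hpow : a ^ (n - 1) = 0 ∨ a ^ (n - 1) = 1 := by
    rcases eq_or_ne a 0 with rfl | h0
    · exact (eq_or_ne (n - 1) 0).symm.imp zero_pow fun h => by rw [h, pow_zero]
    · exact .inr (mul_right_cancel₀ h0 ((pow_sub_one_mul hn a).trans (ha.trans (one_mul a).symm)))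
  rcases hpow with h | h
  · simpa [h] using intCast_pow_of_dvd_card hq (-1)
  · simpa [h] using intCast_pow_of_dvd_card hq (n - 1)

end FiniteField

lemma pred_mul_succ_lt_of_le_div {q n k : ℕ} (hn : 2 ≤ n) (hk : k ≤ (n + q - 1) / (q + 1)) :
    (k - 1) * (q + 1) < n - 1 := by
  have hmul := (Nat.le_div_iff_mul_le (Nat.add_one_pos q)).1 hk
  rw [Nat.sub_mul]
  omega

/-- For `(n−1) ∣ q²−1` and `1 ≤ k ≤ ⌊(n+q−1)/(q+1)⌋` there is an MDS Hermitian
self-orthogonal `[n,k]_{q²}` code; explicitly, on the `n` evaluation points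
`{α : α^n = α}` one has `n·αᵢ^{n−1} − 1 ∈ 𝔽_q^*`, and for any `vᵢ` with
`vᵢ^{q+1}(n·αᵢ^{n−1} − 1) = 1` the corresponding GRS code works. -/
theorem stmt5 (q : ℕ) (hq : IsPrimePow q)
    (F : Type*) [Field F] [Fintype F] (hF : Fintype.card F = q ^ 2)
    (n : ℕ) (hn : 2 ≤ n) (hdvd : (n - 1) ∣ q ^ 2 - 1)
    (k : ℕ) (hk1 : 1 ≤ k) (hk2 : k ≤ (n + q - 1) / (q + 1)) :
    (∃ C : Submodule F (Fin n → F),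
      Module.finrank F C = k ∧ IsHermSelfOrth q C ∧ MinDistEq C (n - k + 1)) ∧
    Set.ncard {x : F | x ^ n = x} = n ∧
    (∀ α : Fin n → F, Function.Injective α →
      Set.range α = {x : F | x ^ n = x} →
      (∀ i, ((n : F) * α i ^ (n - 1) - 1) ^ q = (n : F) * α i ^ (n - 1) - 1 ∧
        (n : F) * α i ^ (n - 1) - 1 ≠ 0) ∧
      (∀ v : Fin n → F, (∀ i, v i ≠ 0) →
        (∀ i, v i ^ (q + 1) * ((n : F) * α i ^ (n - 1) - 1) = 1) →
        Module.finrank F (evalCode k α v) = k ∧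
        IsHermSelfOrth q (evalCode k α v) ∧
        MinDistEq (evalCode k α v) (n - k + 1))) := by
  have hcard : {x : F | x ^ n = x}.ncard = n := by
    have h := ncard_pow_succ_eq_self (m := n - 1) (hF ▸ hdvd)
    rwa [Nat.sub_add_cancel (one_le_two.trans hn)] at h
  have hroot {α : Fin n → F} (hrange : Set.range α = {x : F | x ^ n = x}) (i : Fin n) :
      α i ^ n = α i :=
    hrange.subset (Set.mem_range_self i)
  have hvalue {α : Fin n → F} (hα : Function.Injective α)
      (hrange : Set.range α = {x : F | x ^ n = x}) (i : Fin n) :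
      ((n : F) * α i ^ (n - 1) - 1) ^ q = (n : F) * α i ^ (n - 1) - 1 ∧
        (n : F) * α i ^ (n - 1) - 1 ≠ 0 :=
    ⟨mul_pow_sub_one_pow_of_pow_eq (hF ▸ dvd_pow_self q two_ne_zero) (by omega) (hroot hrange i),
      mul_pow_sub_one_ne_zero_of_pow_eq hn hα (hroot hrange) i⟩
  have hcode {α : Fin n → F} (hα : Function.Injective α)
      (hrange : Set.range α = {x : F | x ^ n = x}) (v : Fin n → F)
      (hv : ∀ i, v i ^ (q + 1) * ((n : F) * α i ^ (n - 1) - 1) = 1) :=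
    evalCode_mds_isHermSelfOrth hk1 (pred_mul_succ_lt_of_le_div hn hk2) hα fun i =>
      (eval_derivative_nodal_of_pow_eq hn hα (hroot hrange) i).symm ▸ hv i
  obtain ⟨α, hα, hrange⟩ := exists_injective_range_eq_of_ncard_eq (Set.toFinite _) hcard
  choose v hv using fun i =>
    exists_pow_succ_mul_eq_one hF (hvalue hα hrange i).2 (hvalue hα hrange i).1
  exact ⟨⟨_, hcode hα hrange v hv⟩, hcard, fun α hα hrange =>
    ⟨hvalue hα hrange, fun v _ => hcode hα hrange v⟩⟩
end

section
/- Let q be a prime power and let t be an integer with 1 ≤ t ≤ q. Then for every integer k with 1 ≤ k ≤ ⌊(tq + q − 1)/(q+1)⌋ there exists an MDS Hermitian self-orthogonal [tq, k]_{q²} code. -/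
/-!
A generalized Reed–Solomon code `{(v i * f (a i)) : deg f < k}` is always MDS. Its Hermitian
products are the sums `∑ i, v i ^ (q + 1) * (f * g ^ q) (a i)`. If `v i ^ (q + 1)` is proportional
to the Lagrange weight `w i = ∏ j ≠ i, (a i - a j)⁻¹`, such a sum is, up to a factor, the
coefficient of `X ^ (n - 1)` in `f * g ^ q`, which vanishes as soon as
`(k - 1) * (q + 1) < n - 1`.

Since the norm `𝔽_{q²} → 𝔽_q` is surjective, such `v` exist whenever all ratios `w i / w j` lie
in `𝔽_q`. For the nodes take the union of the fibres of `L x = x ^ q - x` over a `t`-element set `T`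
of elements `y` with `y ^ q = -y`. As `L` has derivative `-1`, the weight at a node `x` is, up to
sign, the weight of `L x` within `T`, whose `q`-th power is again itself up to a sign not depending
on `x`. The evaluation set `{u_i α + c : c ∈ 𝔽_q}` of the paper is the union of the fibres of `L`
over the elements `u_i (α ^ q - α)`.
-/

open scoped BigOperators

open Finset Polynomial

lemma card_fiber_eq_of_card_fiber_le {α β : Type*} [DecidableEq β] {f : α → β} {s : Finset α}
    {t : Finset β} {n : ℕ} (hf : Set.MapsTo f s t) (hn : ∀ y ∈ t, #{x ∈ s | f x = y} ≤ n)
    (hs : n * #t ≤ #s) {y : β} (hy : y ∈ t) : #{x ∈ s | f x = y} = n := by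
  have hsum : ∑ y ∈ t, #{x ∈ s | f x = y} = ∑ _y ∈ t, n := by
    refine le_antisymm (sum_le_sum hn) ?_
    rwa [← card_eq_sum_card_fiberwise hf, sum_const, smul_eq_mul, mul_comm]
  exact (sum_eq_sum_iff_of_le hn).1 hsum y hy

lemma card_filter_mem_eq_of_card_fiber_eq {α β : Type*} [DecidableEq β] {f : α → β} {s : Finset α}
    {t : Finset β} {n : ℕ} (h : ∀ y ∈ t, #{x ∈ s | f x = y} = n) :
    #{x ∈ s | f x ∈ t} = #t * n := by
  have hmaps : Set.MapsTo f ({x ∈ s | f x ∈ t} : Finset α) t := fun x hx => (mem_filter.1 hx).2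
  rw [card_eq_sum_card_fiberwise hmaps, ← smul_eq_mul, ← sum_const]
  refine sum_congr rfl fun y hy => ?_
  rw [← h y hy, filter_filter]
  congr 1
  exact filter_congr fun x _ => and_iff_right_of_imp fun hx => hx ▸ hy

/-- The image of the `n`-th power map is contained in the kernel of the `m`-th, and both have
order `m`. -/
lemma exists_pow_eq_of_pow_eq_one_of_isCyclic {G : Type*} [CommGroup G] [IsCyclic G] [Finite G]
    {m n : ℕ} (hG : Nat.card G = m * n) {x : G} (hx : x ^ m = 1) : ∃ y : G, y ^ n = x := by
  have hpos : 0 < m * n := hG ▸ Nat.card_pos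
  have hle : (powMonoidHom n : G →* G).range ≤ (powMonoidHom m : G →* G).ker := by
    rintro _ ⟨y, rfl⟩
    simp only [MonoidHom.mem_ker, powMonoidHom_apply, ← pow_mul, mul_comm n m, ← hG,
      pow_card_eq_one']
  have hcard :
      Nat.card (powMonoidHom m : G →* G).ker ≤ Nat.card (powMonoidHom n : G →* G).range := by
    rw [IsCyclic.card_powMonoidHom_ker, IsCyclic.card_powMonoidHom_range, hG,
      Nat.gcd_mul_right_left, Nat.gcd_mul_left_left,
      Nat.mul_div_cancel _ (Nat.pos_of_mul_pos_left hpos)]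
  have hmem : x ∈ (powMonoidHom m : G →* G).ker := hx
  rw [← Subgroup.eq_of_le_of_card_ge hle hcard] at hmem
  exact hmem

lemma card_filter_eval_eq_le_natDegree {R : Type*} [CommRing R] [IsDomain R] [Fintype R]
    [DecidableEq R] {p : R[X]} (hp : 0 < p.natDegree) (y : R) :
    #{x | p.eval x = y} ≤ p.natDegree := by
  have hdeg : 0 < p.degree := natDegree_pos_iff_degree_pos.1 hp
  calc #{x | p.eval x = y} ≤ #(p - C y).roots.toFinset :=
        card_le_card fun x hx => by simpa [mem_roots_sub_C hdeg] using hx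
    _ ≤ (p - C y).roots.card := Multiset.toFinset_card_le _
    _ ≤ p.natDegree := card_roots_sub_C' hdeg

section NodalWeight

variable {F ι : Type*} [Field F] {s : Finset ι} {v : ι → F}

lemma sum_nodalWeight_mul_eval_eq_zero [DecidableEq ι] (hv : Set.InjOn v s) {p : F[X]}
    (hp : p.natDegree + 1 < #s) : ∑ i ∈ s, Lagrange.nodalWeight s v i * p.eval (v i) = 0 := by
  have hdeg : p.degree < #s := degree_le_natDegree.trans_lt (by exact_mod_cast by omega)
  calc ∑ i ∈ s, Lagrange.nodalWeight s v i * p.eval (v i) = p.coeff (#s - 1) := by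
        rw [Lagrange.coeff_eq_sum hv hdeg]
        refine sum_congr rfl fun i _ => ?_
        rw [Lagrange.nodalWeight, prod_inv_distrib, div_eq_mul_inv, mul_comm]
    _ = 0 := coeff_eq_zero_of_natDegree_lt (by omega)

lemma nodal_eq_nodal_comp {P : F[X]} {T : Finset F} (hv : Set.InjOn v s) (hP : P.Monic)
    (hmem : ∀ i ∈ s, P.eval (v i) ∈ T) (hP0 : P.natDegree ≠ 0) (hcard : #s = #T * P.natDegree) :
    Lagrange.nodal s v = (Lagrange.nodal T id).comp P := by
  have hmonic : ((Lagrange.nodal T id).comp P).Monic := Lagrange.nodal_monic.comp hP hP0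
  refine eq_of_degree_le_of_eval_index_eq s hv Lagrange.degree_nodal.le ?_ ?_ fun i hi => ?_
  · rw [Lagrange.degree_nodal, degree_eq_natDegree hmonic.ne_zero, natDegree_comp,
      Lagrange.natDegree_nodal, hcard]
  · rw [hmonic.leadingCoeff, Lagrange.nodal_monic.leadingCoeff]
  · rw [Lagrange.eval_nodal_at_node hi, eval_comp]
    exact (Lagrange.eval_nodal_at_node (v := id) (hmem i hi)).symm

/-- The chain rule for `Lagrange.nodal s v = (Lagrange.nodal T id).comp P`. -/
lemma nodalWeight_eq_mul_nodalWeight_eval [DecidableEq ι] [DecidableEq F] {P : F[X]} {T : Finset F}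
    (hv : Set.InjOn v s) (hP : P.Monic) (hmem : ∀ i ∈ s, P.eval (v i) ∈ T)
    (hP0 : P.natDegree ≠ 0) (hcard : #s = #T * P.natDegree) {i : ι} (hi : i ∈ s) :
    Lagrange.nodalWeight s v i =
      (P.derivative.eval (v i))⁻¹ * Lagrange.nodalWeight T id (P.eval (v i)) := by
  rw [Lagrange.nodalWeight_eq_eval_derivative_nodal hi,
    Lagrange.nodalWeight_eq_eval_derivative_nodal (hmem i hi),
    nodal_eq_nodal_comp hv hP hmem hP0 hcard, derivative_comp, eval_mul, eval_comp, mul_inv, id]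

end NodalWeight

section GeneralizedReedSolomon

variable {F ι : Type*} [Field F]

/-- The encoding map `f ↦ (v i * f (a i))` of generalized Reed–Solomon codes, defined on
polynomials of all degrees. -/
noncomputable def grsEncode (a v : ι → F) : F[X] →ₗ[F] ι → F :=
  LinearMap.pi fun i => v i • leval (a i)

/-- The generalized Reed–Solomon code with nodes `a` and column multipliers `v`: the words
`(v i * f (a i))` with `f` of degree less than `k`. Nodes may repeat and multipliers may vanish; the
usual assumptions on them appear only in the lemmas. -/
noncomputable def grsCode (a v : ι → F) (k : ℕ) : Submodule F (ι → F) :=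
  (degreeLT F k).map (grsEncode a v)

lemma grsEncode_apply (a v : ι → F) (f : F[X]) (i : ι) :
    grsEncode a v f i = v i * f.eval (a i) := rfl

variable [Fintype ι] {a v : ι → F} {k : ℕ}

lemma card_lt_hammingNorm_grsEncode_add [DecidableEq F] (ha : Function.Injective a)
    (hv : ∀ i, v i ≠ 0) {f : F[X]} (hf : f ∈ degreeLT F k) (hf0 : f ≠ 0) :
    Fintype.card ι < hammingNorm (grsEncode a v f) + k := by
  have hzeros : #{i | grsEncode a v f i = 0} < k := by
    by_contra! hle
    refine hf0 (eq_zero_of_degree_lt_of_eval_index_eq_zero _ ha.injOn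
      ((mem_degreeLT.1 hf).trans_le (by exact_mod_cast hle)) fun i hi => ?_)
    simpa [grsEncode_apply, hv] using hi
  have hsplit := card_filter_add_card_filter_not (s := univ) fun i => grsEncode a v f i = 0
  rw [card_univ] at hsplit
  simp only [hammingNorm, ne_eq]
  omega

lemma injOn_grsEncode_degreeLT (ha : Function.Injective a) (hv : ∀ i, v i ≠ 0)
    (hk : k ≤ Fintype.card ι) : Set.InjOn (grsEncode a v) (degreeLT F k) := by
  classical
  refine LinearMap.injOn_of_disjoint_ker subset_rfl (LinearMap.disjoint_ker.2 fun f hf hf0 => ?_)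
  by_contra hne
  have hlt := card_lt_hammingNorm_grsEncode_add ha hv hf hne
  rw [hf0, hammingNorm_zero] at hlt
  omega

lemma finrank_grsCode (ha : Function.Injective a) (hv : ∀ i, v i ≠ 0)
    (hk : k ≤ Fintype.card ι) : Module.finrank F (grsCode a v k) = k := by
  have hinj : Function.Injective ((grsEncode a v).domRestrict (degreeLT F k)) :=
    (injOn_grsEncode_degreeLT ha hv hk).injective
  rw [grsCode, ← LinearMap.range_domRestrict, LinearMap.finrank_range_of_inj hinj,
    (degreeLTEquiv F k).finrank_eq, Module.finrank_fin_fun]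

/-- The polynomial vanishing at exactly `k - 1` nodes attains the Singleton bound. -/
lemma exists_mem_grsCode_hammingNorm_eq [DecidableEq F] (ha : Function.Injective a)
    (hv : ∀ i, v i ≠ 0) (hk1 : 1 ≤ k) (hk : k ≤ Fintype.card ι) :
    ∃ c ∈ grsCode a v k, hammingNorm c = Fintype.card ι - k + 1 := by
  classical
  obtain ⟨S, -, hS⟩ := exists_subset_card_eq (s := (univ : Finset ι)) (n := k - 1)
    (by rw [card_univ]; omega)
  have hdeg : Lagrange.nodal S a ∈ degreeLT F k := by
    rw [mem_degreeLT, Lagrange.degree_nodal, hS]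
    exact_mod_cast Nat.sub_one_lt_of_lt hk1
  refine ⟨_, Submodule.mem_map_of_mem hdeg, ?_⟩
  have hsupp : ({i | grsEncode a v (Lagrange.nodal S a) i ≠ 0} : Finset ι) = Sᶜ := by
    ext i
    simp [grsEncode_apply, hv, Lagrange.eval_nodal, prod_eq_zero_iff, sub_eq_zero, ha.eq_iff]
  rw [hammingNorm, hsupp, card_compl, hS]
  omega

lemma minDistEq_grsCode {n : ℕ} {a v : Fin n → F} (ha : Function.Injective a)
    (hv : ∀ i, v i ≠ 0) (hk1 : 1 ≤ k) (hk : k ≤ n) : MinDistEq (grsCode a v k) (n - k + 1) := by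
  classical
  have hncard (c : Fin n → F) : Set.ncard {i | c i ≠ 0} = hammingNorm c := by
    rw [Set.ncard_eq_toFinset_card', hammingNorm, Set.toFinset_ofPred]
  simp only [MinDistEq, hncard]
  constructor
  · rintro _ ⟨f, hf, rfl⟩ hne
    have hlt := card_lt_hammingNorm_grsEncode_add ha hv hf fun h => hne (by rw [h, map_zero])
    rw [Fintype.card_fin] at hlt
    omega
  · obtain ⟨c, hc, hcard⟩ := exists_mem_grsCode_hammingNorm_eq ha hv hk1 (by simpa using hk)
    rw [Fintype.card_fin] at hcard
    exact ⟨c, hc, hammingNorm_ne_zero_iff.1 (by omega), hcard⟩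

lemma isHermSelfOrth_grsCode {q n : ℕ} {a v : Fin n → F} {c : F} (ha : Function.Injective a)
    (hv : ∀ i, v i ^ (q + 1) = c * Lagrange.nodalWeight univ a i) (hk : k * (q + 1) < n + q) :
    IsHermSelfOrth q (grsCode a v k) := by
  rintro _ ⟨f, hf, rfl⟩ _ ⟨g, hg, rfl⟩
  obtain rfl | hf0 := eq_or_ne f 0
  · simp
  have hfk : f.natDegree < k := (natDegree_lt_iff_degree_lt hf0).2 (mem_degreeLT.1 hf)
  obtain ⟨j, rfl⟩ := Nat.exists_eq_succ_of_ne_zero hfk.ne_bot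
  rw [Nat.succ_eq_add_one, degreeLT_succ_eq_degreeLE] at hg
  have hgj : g.natDegree ≤ j := natDegree_le_of_degree_le (mem_degreeLE.1 hg)
  have hdeg : (f * g ^ q).natDegree + 1 < n := by
    have hmul : (f * g ^ q).natDegree ≤ f.natDegree + q * g.natDegree :=
      natDegree_mul_le.trans (Nat.add_le_add_left natDegree_pow_le _)
    nlinarith
  calc ∑ i, grsEncode a v f i * grsEncode a v g i ^ q
      = c * ∑ i, Lagrange.nodalWeight univ a i * (f * g ^ q).eval (a i) := by
        rw [mul_sum]
        refine sum_congr rfl fun i _ => ?_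
        rw [grsEncode_apply, grsEncode_apply, eval_mul, eval_pow, ← mul_assoc, ← hv]
        ring
    _ = 0 := by rw [sum_nodalWeight_mul_eval_eq_zero ha.injOn (by simpa using hdeg), mul_zero]

end GeneralizedReedSolomon

section FiniteField

variable {F : Type*} [Field F] [Fintype F] {q : ℕ}

lemma sub_pow_of_dvd_card (hq : q ∣ Fintype.card F) (x y : F) :
    (x - y) ^ q = x ^ q - y ^ q := by
  obtain ⟨p, _⟩ := CharP.exists F
  obtain ⟨n, hp, hcard⟩ := FiniteField.card F p
  obtain ⟨m, -, rfl⟩ := (Nat.dvd_prime_pow hp).1 (hcard ▸ hq)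
  have : Fact p.Prime := ⟨hp⟩
  exact sub_pow_char_pow x y m

lemma nodalWeight_pow_of_pow_eq_neg {ι : Type*} [DecidableEq ι] {s : Finset ι} {v : ι → F}
    (hq : q ∣ Fintype.card F) (hv : ∀ i ∈ s, v i ^ q = -v i) {i : ι} (hi : i ∈ s) :
    Lagrange.nodalWeight s v i ^ q = (-1) ^ (#s - 1) * Lagrange.nodalWeight s v i := by
  have hfactor : ∀ j ∈ s.erase i, (v i - v j)⁻¹ ^ q = -1 * (v i - v j)⁻¹ := fun j hj => by
    rw [inv_pow, sub_pow_of_dvd_card hq, hv i hi, hv j (mem_of_mem_erase hj), neg_sub_neg,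
      ← neg_sub, inv_neg, neg_one_mul]
  rw [Lagrange.nodalWeight, ← prod_pow, prod_congr rfl hfactor, prod_mul_distrib, prod_const,
    card_erase_of_mem hi]

lemma one_lt_of_card_eq_sq (hF : Fintype.card F = q ^ 2) : 1 < q :=
  (one_lt_sq_iff₀ q.zero_le).1 (hF ▸ Fintype.one_lt_card)

lemma exists_pow_succ_eq_of_pow_eq_self (hF : Fintype.card F = q ^ 2) {z : F} (hz : z ^ q = z) :
    ∃ v : F, v ^ (q + 1) = z := by
  obtain rfl | hz0 := eq_or_ne z 0
  · exact ⟨0, zero_pow q.succ_ne_zero⟩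
  have hq : 1 < q := one_lt_of_card_eq_sq hF
  have hcard : Nat.card Fˣ = (q - 1) * (q + 1) := by
    rw [Nat.card_units, Nat.card_eq_fintype_card, hF, mul_comm, ← Nat.sq_sub_sq, one_pow]
  have hpow : Units.mk0 z hz0 ^ (q - 1) = 1 := by
    rw [← mul_left_inj (Units.mk0 z hz0), ← pow_succ, Nat.sub_add_cancel hq.le, one_mul]
    exact Units.ext hz
  obtain ⟨v, hv⟩ := exists_pow_eq_of_pow_eq_one_of_isCyclic hcard hpow
  exact ⟨v, by simpa using congrArg Units.val hv⟩

/-- The quotients `w i / w j` are fixed by `z ↦ z ^ q`, so they are norms. -/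
lemma exists_pow_succ_eq_mul {ι : Type*} (hF : Fintype.card F = q ^ 2) {w : ι → F} {ε : F}
    (hw0 : ∀ i, w i ≠ 0) (hw : ∀ i, w i ^ q = ε * w i) :
    ∃ (c : F) (v : ι → F), (∀ i, v i ≠ 0) ∧ ∀ i, v i ^ (q + 1) = c * w i := by
  obtain _ | ⟨⟨j⟩⟩ := isEmpty_or_nonempty ι
  · exact ⟨0, 0, isEmptyElim, isEmptyElim⟩
  have hε : ε ≠ 0 := left_ne_zero_of_mul (hw j ▸ pow_ne_zero q (hw0 j))
  have hfixed (i : ι) : ((w j)⁻¹ * w i) ^ q = (w j)⁻¹ * w i := by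
    rw [mul_pow, inv_pow, hw, hw]
    field_simp
  choose v hv using fun i => exists_pow_succ_eq_of_pow_eq_self hF (hfixed i)
  refine ⟨(w j)⁻¹, v, fun i h => ?_, hv⟩
  have hne : v i ^ (q + 1) ≠ 0 := hv i ▸ mul_ne_zero (inv_ne_zero (hw0 j)) (hw0 i)
  exact hne (by rw [h, zero_pow q.succ_ne_zero])

lemma pow_sub_self_pow_eq_neg (hF : Fintype.card F = q ^ 2) (x : F) :
    (x ^ q - x) ^ q = -(x ^ q - x) := by
  have hfrob : (x ^ q) ^ q = x := by rw [← pow_mul, ← sq, ← hF, FiniteField.pow_card]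
  rw [sub_pow_of_dvd_card (hF ▸ dvd_pow_self q two_ne_zero), hfrob, neg_sub]

lemma card_filter_pow_sub_self_eq_le [DecidableEq F] (hq : 1 < q) (y : F) :
    #{x : F | x ^ q - x = y} ≤ q := by
  have hdeg : (X ^ q - X : F[X]).natDegree = q := FiniteField.X_pow_card_sub_X_natDegree_eq F hq
  simpa [hdeg] using
    card_filter_eval_eq_le_natDegree (by omega : 0 < (X ^ q - X : F[X]).natDegree) y

lemma card_filter_pow_eq_neg [DecidableEq F] (hF : Fintype.card F = q ^ 2) :
    #{y : F | y ^ q = -y} = q := by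
  have hq : 1 < q := one_lt_of_card_eq_sq hF
  apply le_antisymm
  · have hdeg : (X ^ q + X : F[X]).natDegree = q := by
      rw [natDegree_add_eq_left_of_natDegree_lt] <;> simp [hq]
    simpa [hdeg, add_eq_zero_iff_eq_neg] using
      card_filter_eval_eq_le_natDegree (by omega : 0 < (X ^ q + X : F[X]).natDegree) 0
  · have hle := card_le_mul_card_image_of_maps_to (s := univ) (t := {y : F | y ^ q = -y})
      (f := fun x => x ^ q - x) (by simp [pow_sub_self_pow_eq_neg hF]) q
      fun y _ => card_filter_pow_sub_self_eq_le hq y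
    rw [card_univ, hF, sq] at hle
    exact Nat.le_of_mul_le_mul_left hle (by omega)

lemma card_filter_pow_sub_self_eq [DecidableEq F] (hF : Fintype.card F = q ^ 2) {y : F}
    (hy : y ^ q = -y) : #{x : F | x ^ q - x = y} = q := by
  refine card_fiber_eq_of_card_fiber_le (t := {y : F | y ^ q = -y})
    (fun x _ => by simp [pow_sub_self_pow_eq_neg hF])
    (fun z _ => card_filter_pow_sub_self_eq_le (one_lt_of_card_eq_sq hF) z) ?_ (by simpa using hy)
  rw [card_filter_pow_eq_neg hF, card_univ, hF, sq]

lemma exists_injective_pow_sub_self_mem (hF : Fintype.card F = q ^ 2) {T : Finset F}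
    (hT : ∀ y ∈ T, y ^ q = -y) :
    ∃ a : Fin (#T * q) → F, Function.Injective a ∧ ∀ i, a i ^ q - a i ∈ T := by
  classical
  have hcard : #{x : F | x ^ q - x ∈ T} = #T * q :=
    card_filter_mem_eq_of_card_fiber_eq fun y hy => card_filter_pow_sub_self_eq hF (hT y hy)
  let e := (equivFinOfCardEq hcard).symm
  exact ⟨fun i => e i, Subtype.val_injective.comp e.injective, fun i => (mem_filter.1 (e i).2).2⟩

lemma nodalWeight_eq_neg_nodalWeight_pow_sub_self {ι : Type*} [DecidableEq ι] [DecidableEq F]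
    {s : Finset ι} {a : ι → F} {T : Finset F} (hF : Fintype.card F = q ^ 2) (ha : Set.InjOn a s)
    (hmem : ∀ i ∈ s, a i ^ q - a i ∈ T) (hcard : #s = #T * q) {i : ι} (hi : i ∈ s) :
    Lagrange.nodalWeight s a i = -Lagrange.nodalWeight T id (a i ^ q - a i) := by
  have hq : 1 < q := one_lt_of_card_eq_sq hF
  have hdeg : (X ^ q - X : F[X]).natDegree = q := FiniteField.X_pow_card_sub_X_natDegree_eq F hq
  have hq0 : (q : F) = 0 := by
    have hsq := FiniteField.cast_card_eq_zero F
    rwa [hF, Nat.cast_pow, sq_eq_zero_iff] at hsq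
  have hweight := nodalWeight_eq_mul_nodalWeight_eval ha (P := X ^ q - X) (T := T)
    (monic_X_pow_sub (by simpa using hq)) (by simpa using hmem) (by omega) (by rw [hdeg, hcard]) hi
  simpa [derivative_X_pow, hq0] using hweight

lemma exists_nodes_nodalWeight_pow_eq (hF : Fintype.card F = q ^ 2) {t : ℕ} (ht : t ≤ q) :
    ∃ (a : Fin (t * q) → F) (ε : F), Function.Injective a ∧
      ∀ i, Lagrange.nodalWeight univ a i ^ q = ε * Lagrange.nodalWeight univ a i := by
  classical
  obtain ⟨T, hTsub, rfl⟩ := exists_subset_card_eq (ht.trans (card_filter_pow_eq_neg hF).ge)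
  have hT : ∀ y ∈ T, y ^ q = -y := fun y hy => (mem_filter.1 (hTsub hy)).2
  obtain ⟨a, ha, hmem⟩ := exists_injective_pow_sub_self_mem hF hT
  have hweight (i : Fin (#T * q)) := nodalWeight_eq_neg_nodalWeight_pow_sub_self hF ha.injOn
    (fun i _ => hmem i) (by simp) (mem_univ i)
  have hpow (i : Fin (#T * q)) := nodalWeight_pow_of_pow_eq_neg (v := id)
    (hF ▸ dvd_pow_self q two_ne_zero) hT (hmem i)
  refine ⟨a, -((-1) ^ q * (-1) ^ (#T - 1)), ha, fun i => ?_⟩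
  rw [hweight, neg_pow, hpow]
  ring

end FiniteField

/-- For `1 ≤ t ≤ q` and `1 ≤ k ≤ ⌊(tq+q−1)/(q+1)⌋` there exists an MDS Hermitian
self-orthogonal `[tq, k]_{q²}` code. -/
theorem stmt12 (q t : ℕ) (hq : IsPrimePow q) (ht1 : 1 ≤ t) (ht2 : t ≤ q)
    (k : ℕ) (hk1 : 1 ≤ k) (hk2 : k ≤ (t * q + q - 1) / (q + 1))
    (F : Type*) [Field F] [Fintype F] (hF : Fintype.card F = q ^ 2) :
    ∃ C : Submodule F (Fin (t * q) → F),
      Module.finrank F C = k ∧ IsHermSelfOrth q C ∧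
      MinDistEq C (t * q - k + 1) := by
  classical
  obtain ⟨a, ε, ha, hw⟩ := exists_nodes_nodalWeight_pow_eq hF ht2
  have hw0 (i : Fin (t * q)) : Lagrange.nodalWeight univ a i ≠ 0 :=
    Lagrange.nodalWeight_ne_zero ha.injOn (mem_univ i)
  obtain ⟨c, v, hv0, hv⟩ := exists_pow_succ_eq_mul hF hw0 hw
  have hk : k * (q + 1) < t * q + q := by
    have hle : k * (q + 1) ≤ t * q + q - 1 := (Nat.le_div_iff_mul_le q.succ_pos).1 hk2
    have hq : 0 < q := hq.pos
    omega
  have hkn : k ≤ t * q := by nlinarith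
  exact ⟨grsCode a v k, finrank_grsCode ha hv0 (by simpa using hkn),
    isHermSelfOrth_grsCode ha hv hk, minDistEq_grsCode ha hv0 hk1 hkn⟩
end
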